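/- Let Y, Z ∈ ℂ^{N×N} satisfy Yᴴ Y + Zᴴ Z = I_N. Then the characteristic polynomial of the matrix Y (Zᴴ Z) Yᴴ = (Z Yᴴ)ᴴ (Z Yᴴ) equals the characteristic polynomial of Zᴴ Z − (Zᴴ Z)². Consequently, the squared singular values of Z Yᴴ coincide (with multiplicity) with the numbers λ − λ² as λ ranges over the eigenvalues of Zᴴ Z. -/

import Mathlib

open Matrix
open scoped Matrix

section

open Polynomial (X)

theorem conjTranspose_mul_self_mul_conjTranspose {R m n p : Type*} [NonUnitalSemiring R]
    [StarRing R] [Fintype m] [Fintype n] (Y : Matrix p n R) (Z : Matrix m n R) :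
    (Z * Yᴴ)ᴴ * (Z * Yᴴ) = Y * (Zᴴ * Z) * Yᴴ := by
  simp only [conjTranspose_mul, conjTranspose_conjTranspose, Matrix.mul_assoc]

variable {R m n : Type*} [CommRing R] [Fintype m] [DecidableEq m] [Fintype n] [DecidableEq n]

theorem X_pow_mul_charpoly_mul_mul_of_mul_add_eq_one {A : Matrix n m R} {B : Matrix m n R}
    {C : Matrix n n R} (h : A * B + C = 1) :
    X ^ Fintype.card n * (B * C * A).charpoly =
      X ^ Fintype.card m * (C - C ^ 2).charpoly := by
  have hABC : A * (B * C) = C - C ^ 2 := by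
    rw [← Matrix.mul_assoc, eq_sub_of_add_eq h, one_sub_mul, sq]
  rw [charpoly_mul_comm', hABC]

theorem charpoly_cross_term_general {p : Type*} [Fintype p] [StarRing R] (Y : Matrix m n R)
    (Z : Matrix p n R) (h : Yᴴ * Y + Zᴴ * Z = 1) :
    (Z * Yᴴ)ᴴ * (Z * Yᴴ) = Y * (Zᴴ * Z) * Yᴴ ∧
    X ^ Fintype.card n * (Y * (Zᴴ * Z) * Yᴴ).charpoly =
      X ^ Fintype.card m * (Zᴴ * Z - (Zᴴ * Z) ^ 2).charpoly :=
  ⟨conjTranspose_mul_self_mul_conjTranspose Y Z, X_pow_mul_charpoly_mul_mul_of_mul_add_eq_one h⟩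

end

/-- Let `Y, Z ∈ ℂ^{N×N}` satisfy `Yᴴ Y + Zᴴ Z = I_N`.  Then
`Y (Zᴴ Z) Yᴴ = (Z Yᴴ)ᴴ (Z Yᴴ)`, and its characteristic polynomial equals the characteristic
polynomial of `Zᴴ Z − (Zᴴ Z)²`; hence the squared singular values of `Z Yᴴ` are the numbers
`λ − λ²` as `λ` ranges over the eigenvalues of `Zᴴ Z` (with multiplicity). -/
theorem charpoly_cross_term {N : ℕ}
    (Y Z : Matrix (Fin N) (Fin N) ℂ)
    (h : Yᴴ * Y + Zᴴ * Z = 1) :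
    (Z * Yᴴ)ᴴ * (Z * Yᴴ) = Y * (Zᴴ * Z) * Yᴴ ∧
    (Y * (Zᴴ * Z) * Yᴴ).charpoly = (Zᴴ * Z - (Zᴴ * Z) ^ 2).charpoly :=
  (charpoly_cross_term_general Y Z h).imp_right
    (mul_left_cancel₀ (pow_ne_zero _ Polynomial.X_ne_zero))
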